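/- Let F₀ be the affine curve 1 + z₁³ + z₂³ = 0 in ℂ² (an affine chart of the Fermat cubic F: z₀³ + z₁³ + z₂³ = 0 in ℙ²), with the order-3 automorphism σ₀: (z₁,z₂) ↦ (ω²·z₁, ω²·z₂), and let F₁ be the affine curve x³ = t(t+1) in ℂ², with the order-3 automorphism σ₁: (t,x) ↦ (t, ω·x). Then F₀ and F₁ are G-birationally equivalent for G = ℤ/3ℤ: there is a ℂ-algebra isomorphism φ: Frac(ℂ[z₁,z₂]/(1 + z₁³ + z₂³)) → Frac(ℂ[t,x]/(x³ − t(t+1))) of function fields satisfying φ ∘ σ̂₀ = σ̂₁ ∘ φ, where σ̂₀ and σ̂₁ denote the field automorphisms induced by σ₀ and σ₁. -/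

import Mathlib

/-!
Formalization conventions.

* The function field of an affine variety whose coordinate ring `ℂ[x₁,…,xₙ]/I` is an
  integral domain is formalized as `FractionRing` of that coordinate ring (for the total
  rings of fractions of the rings appearing here this is the function field).
* Two such varieties are birationally equivalent iff their function fields are
  isomorphic as `ℂ`-algebras.
-/

noncomputable section
open MvPolynomial

/-- `ω = exp(2πi/3) ∈ ℂ`, a fixed primitive cube root of unity. -/
def ω : ℂ := Complex.exp (2 * Real.pi * Complex.I / 3)

/-- Coordinate ring of the affine hypersurface `f = 0` in `ℂⁿ`. -/
abbrev HSurf {n : ℕ} (f : MvPolynomial (Fin n) ℂ) : Type :=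
  MvPolynomial (Fin n) ℂ ⧸ Ideal.span {f}

/-- Coordinate ring of the affine variety `f = g = 0` in `ℂⁿ`. -/
abbrev HSurf2 {n : ℕ} (f g : MvPolynomial (Fin n) ℂ) : Type :=
  MvPolynomial (Fin n) ℂ ⧸ Ideal.span {f, g}

/-- The image of a polynomial `p` in the function field of the hypersurface `f = 0`. -/
def cls {n : ℕ} (f : MvPolynomial (Fin n) ℂ) (p : MvPolynomial (Fin n) ℂ) :
    FractionRing (HSurf f) :=
  algebraMap (HSurf f) (FractionRing (HSurf f)) (Ideal.Quotient.mk _ p)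

/-- The image of a polynomial `p` in the function field of the variety `f = g = 0`. -/
def cls2 {n : ℕ} (f g : MvPolynomial (Fin n) ℂ) (p : MvPolynomial (Fin n) ℂ) :
    FractionRing (HSurf2 f g) :=
  algebraMap (HSurf2 f g) (FractionRing (HSurf2 f g)) (Ideal.Quotient.mk _ p)

/-- Defining polynomial of the affine Fermat cubic `F₀ : 1 + z₁³ + z₂³ = 0` in `ℂ²`
(`z₁ = X 0`, `z₂ = X 1`), an affine chart of the Fermat cubic
`F : z₀³ + z₁³ + z₂³ = 0` in `ℙ²`. -/
def pF₀ : MvPolynomial (Fin 2) ℂ := 1 + X 0 ^ 3 + X 1 ^ 3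

/-- Defining polynomial of the affine curve `F₁ : x³ = t(t+1)` in `ℂ²`
(`t = X 0`, `x = X 1`). -/
def pF₁ : MvPolynomial (Fin 2) ℂ := X 1 ^ 3 - X 0 * (X 0 + 1)

/-!
On `1 + z₁³ + z₂³ = 0` the function `z₁ + z₂` is invertible, because
`(z₁ + z₂)(z₁² - z₁z₂ + z₂²) = -1`. With `x = 1 / (z₁ + z₂)` and `t = ω(z₂ + ωz₁) / (z₁ + z₂)`,
the factorisation `z₁³ + z₂³ = (z₁ + z₂)(z₁ + ωz₂)(z₁ + ω²z₂)` becomes `x³ = t(t + 1)`, and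
conversely `z₁` and `z₂` are recovered as affine functions of `t` divided by `x`. So the affine
curve `F₀` is the open subset `x ≠ 0` of `F₁`, that is `ℂ[F₀] ≅ ℂ[F₁][1/x]`, and the two rings
have the same fractions. Since `t` is homogeneous of degree `0` in `(z₁, z₂)` and `x` of degree
`-1`, multiplying both `zᵢ` by `ω²` fixes `t` and multiplies `x` by `ω`.
-/

section FractionRing

variable {R : Type*} [CommRing R]

theorem mk_mem_nonZeroDivisors_of_prime [IsDomain R] {f p : R} (hp : Prime p) (hpf : ¬p ∣ f) :
    Ideal.Quotient.mk (Ideal.span {f}) p ∈ nonZeroDivisors (R ⧸ Ideal.span {f}) := by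
  refine mem_nonZeroDivisors_iff_right.2 fun a ha ↦ ?_
  obtain ⟨q, rfl⟩ := Ideal.Quotient.mk_surjective a
  rw [← map_mul, Ideal.Quotient.eq_zero_iff_dvd] at ha
  obtain ⟨r, hr⟩ := ha
  obtain ⟨s, rfl⟩ : p ∣ r := (hp.dvd_or_dvd ⟨q, by rw [← hr, mul_comm]⟩).resolve_left hpf
  rw [Ideal.Quotient.eq_zero_iff_dvd]
  exact ⟨s, mul_right_cancel₀ hp.ne_zero (by rw [hr]; ring)⟩

theorem exists_fractionRing_algEquiv_of_away {k S : Type*} [CommSemiring k] [CommRing S]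
    [Algebra k R] [Algebra k S] {r : R} (hr : r ∈ nonZeroDivisors R)
    (e : Localization.Away r ≃ₐ[k] S) :
    ∃ ψ : FractionRing R ≃ₐ[k] FractionRing S, ∀ a : R,
      ψ (algebraMap R _ a) = algebraMap S _ (e (algebraMap R _ a)) := by
  have hle : Submonoid.powers r ≤ nonZeroDivisors R := Submonoid.powers_le.2 hr
  let := IsLocalization.localizationAlgebraOfSubmonoidLe (Localization.Away r) (FractionRing R)
    _ _ hle
  have : IsScalarTower R (Localization.Away r) (FractionRing R) :=
    IsLocalization.localization_isScalarTower_of_submonoid_le _ _ _ _ hle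
  have : IsScalarTower k (Localization.Away r) (FractionRing R) := .to₁₃₄ k R _ _
  have : IsFractionRing (Localization.Away r) (FractionRing R) :=
    IsFractionRing.isFractionRing_of_isLocalization _ _ _ hle
  refine ⟨IsFractionRing.algEquivOfAlgEquiv e, fun a ↦ ?_⟩
  rw [IsScalarTower.algebraMap_apply R (Localization.Away r) (FractionRing R),
    IsFractionRing.algEquivOfAlgEquiv_algebraMap]

end FractionRing

namespace HSurf

variable {n : ℕ} (f : MvPolynomial (Fin n) ℂ) {S : Type*} [CommRing S] [Algebra ℂ S]

/-- The `i`-th coordinate function on the hypersurface `f = 0`. -/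
def coord (i : Fin n) : HSurf f := Ideal.Quotient.mk _ (X i)

theorem aeval_coord (p : MvPolynomial (Fin n) ℂ) :
    aeval (coord f) p = Ideal.Quotient.mk (Ideal.span {f}) p :=
  (aeval_unique (Ideal.Quotient.mkₐ ℂ (Ideal.span {f}))).symm ▸ rfl

theorem aeval_coord_self : aeval (coord f) f = 0 :=
  (aeval_coord f f).trans (Ideal.Quotient.mk_singleton_self f)

variable {f}

/-- The `ℂ`-algebra homomorphism out of the coordinate ring of `f = 0` given by an `S`-valued
point of that hypersurface. -/
def lift (v : Fin n → S) (hv : aeval v f = 0) : HSurf f →ₐ[ℂ] S :=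
  Ideal.Quotient.liftₐ _ (aeval v) fun a ha ↦ by
    obtain ⟨b, rfl⟩ := Ideal.mem_span_singleton.1 ha
    rw [map_mul, hv, zero_mul]

theorem lift_coord (v : Fin n → S) (hv : aeval v f = 0) (i : Fin n) :
    lift v hv (coord f i) = v i :=
  aeval_X v i

theorem algHom_ext {φ ψ : HSurf f →ₐ[ℂ] S} (h : ∀ i, φ (coord f i) = ψ (coord f i)) : φ = ψ :=
  Ideal.Quotient.algHom_ext ℂ (MvPolynomial.algHom_ext h)

theorem fractionRing_algEquiv_ext {φ ψ : FractionRing (HSurf f) ≃ₐ[ℂ] S}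
    (h : ∀ i, φ (cls f (X i)) = ψ (cls f (X i))) : φ = ψ := by
  have h' : (φ : FractionRing (HSurf f) →ₐ[ℂ] S) = ψ :=
    IsLocalization.algHom_ext (nonZeroDivisors (HSurf f)) (algHom_ext h)
  exact AlgEquiv.ext (AlgHom.congr_fun h')

theorem cls_smul (a : ℂ) (p : MvPolynomial (Fin n) ℂ) : cls f (a • p) = a • cls f p :=
  map_smul ((Algebra.algHom ℂ (HSurf f) (FractionRing (HSurf f))).comp
    (Ideal.Quotient.mkₐ ℂ (Ideal.span {f}))) a p

theorem cls_ne_zero {p : MvPolynomial (Fin n) ℂ} {v : Fin n → ℂ} (hf : aeval v f = 0)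
    (hp : aeval v p ≠ 0) : cls f p ≠ 0 := by
  intro h
  have hmk : Ideal.Quotient.mk (Ideal.span {f}) p = 0 :=
    IsFractionRing.injective _ _ (h.trans (map_zero _).symm)
  obtain ⟨q, rfl⟩ := (Ideal.Quotient.eq_zero_iff_dvd _ _).1 hmk
  exact hp (by rw [map_mul, hf, zero_mul])

/-- The automorphism of the function field of `f = 0` induced by an automorphism of affine space
that preserves the equation `f`. -/
def functionFieldAut (e : MvPolynomial (Fin n) ℂ ≃ₐ[ℂ] MvPolynomial (Fin n) ℂ) (he : e f = f) :
    FractionRing (HSurf f) ≃ₐ[ℂ] FractionRing (HSurf f) :=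
  IsFractionRing.algEquivOfAlgEquiv <|
    Ideal.quotientEquivAlg (Ideal.span {f}) (Ideal.span {f}) e (by simp [Ideal.map_span, he])

theorem functionFieldAut_cls {e : MvPolynomial (Fin n) ℂ ≃ₐ[ℂ] MvPolynomial (Fin n) ℂ}
    (he : e f = f) (p : MvPolynomial (Fin n) ℂ) :
    functionFieldAut e he (cls f p) = cls f (e p) :=
  IsFractionRing.algEquivOfAlgEquiv_algebraMap _ _

theorem orderOf_eq_prime_of_forall_cls_X {p : ℕ} [Fact p.Prime]
    {σ : FractionRing (HSurf f) ≃ₐ[ℂ] FractionRing (HSurf f)} {d : Fin n → ℂ}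
    (hσ : ∀ i, σ (cls f (X i)) = d i • cls f (X i)) (hd : ∀ i, d i ^ p = 1) {j : Fin n}
    (hj : d j ≠ 1) (hX : cls f (X j) ≠ 0) : orderOf σ = p := by
  have hpow (m : ℕ) (i : Fin n) : (σ ^ m) (cls f (X i)) = d i ^ m • cls f (X i) := by
    induction m with
    | zero => simp
    | succ m ih => rw [pow_succ, AlgEquiv.mul_apply, hσ, map_smul, ih, smul_smul, pow_succ']
  refine orderOf_eq_prime ?_ ?_
  · exact fractionRing_algEquiv_ext fun i ↦ by rw [hpow, hd, one_smul, AlgEquiv.one_apply]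
  · rintro rfl
    have h : (1 - d j) • cls f (X j) = 0 := by
      rw [sub_smul, one_smul, ← hσ, AlgEquiv.one_apply, sub_self]
    exact (smul_ne_zero (sub_ne_zero.2 hj.symm) hX) h

end HSurf

/-- The diagonal automorphism `xᵢ ↦ dᵢ xᵢ` of affine space, on polynomial functions. -/
def diagonalAut {τ R : Type*} [CommSemiring R] (d : τ → Rˣ) :
    MvPolynomial τ R ≃ₐ[R] MvPolynomial τ R :=
  .ofAlgHom (aeval fun i ↦ (d i : R) • X i) (aeval fun i ↦ ((d i)⁻¹ : Rˣ) • X i)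
    (by ext i; simp [Units.smul_def, smul_smul]) (by ext i; simp [Units.smul_def, smul_smul])

theorem diagonalAut_X {τ R : Type*} [CommSemiring R] (d : τ → Rˣ) (i : τ) :
    diagonalAut d (X i) = (d i : R) • X i :=
  aeval_X _ i

section Identities

variable {S : Type*} [CommRing S] {w : S}

theorem cube_eq_of_fermat (hw : w ^ 2 + w + 1 = 0) {z₁ z₂ : S} (h : 1 + z₁ ^ 3 + z₂ ^ 3 = 0)
    {x t : S} (hx : x = -(z₁ ^ 2 - z₁ * z₂ + z₂ ^ 2)) (ht : t = w * ((z₂ + w * z₁) * x)) :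
    x ^ 3 = t * (t + 1) := by
  have hsum : (z₁ + z₂) * x = 1 := by rw [hx]; linear_combination -h
  have ht' : t + 1 = -(w * ((z₁ + w * z₂) * x)) := by
    rw [ht]; linear_combination -hsum + (z₁ + z₂) * x * hw
  rw [ht', ht]
  linear_combination ((1 - w) * x ^ 3 + w ^ 2 * x ^ 2 * z₁ * z₂) * hw + w ^ 3 * x ^ 2 * hx

theorem fermat_of_cube_eq (hw : w ^ 2 + w + 1 = 0) {x t : S} (h : x ^ 3 = t * (t + 1)) {u κ : S}
    (hu : x * u = 1) (hκ : κ * (w - w ^ 2) = 1) :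
    1 + (κ * (w - t) * u) ^ 3 + (κ * (t - w ^ 2) * u) ^ 3 = 0 := by
  have hκ_sq : 3 * κ ^ 2 = -1 := by
    linear_combination -(κ * (w - w ^ 2) + 1) * hκ + κ ^ 2 * (w ^ 2 - 3 * w + 3) * hw
  have hcubes : (w - t) ^ 3 + (t - w ^ 2) ^ 3 = 3 * (w - w ^ 2) * x ^ 3 := by
    rw [h]; linear_combination (w - w ^ 2) * (w ^ 2 - 3 * t) * hw
  calc 1 + (κ * (w - t) * u) ^ 3 + (κ * (t - w ^ 2) * u) ^ 3
      = 1 + (κ * u) ^ 3 * ((w - t) ^ 3 + (t - w ^ 2) ^ 3) := by ring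
    _ = 1 + 3 * κ ^ 2 * (κ * (w - w ^ 2)) * (x * u) ^ 3 := by rw [hcubes]; ring
    _ = 0 := by rw [hκ_sq, hκ, hu]; ring

end Identities

theorem isPrimitiveRoot_ω : IsPrimitiveRoot ω 3 := by
  simpa [ω] using Complex.isPrimitiveRoot_exp 3 three_ne_zero

theorem ω_sq_add_ω_add_one : ω ^ 2 + ω + 1 = 0 := by
  have h := isPrimitiveRoot_ω.geom_sum_eq_zero (by simp)
  simp only [Finset.sum_range_succ, Finset.sum_range_zero] at h
  linear_combination h

section Curves

variable {S : Type*} [CommRing S] [Algebra ℂ S]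

theorem aeval_pF₀ (v : Fin 2 → S) : aeval v pF₀ = 1 + v 0 ^ 3 + v 1 ^ 3 := by simp [pF₀]

theorem aeval_pF₁ (v : Fin 2 → S) : aeval v pF₁ = v 1 ^ 3 - v 0 * (v 0 + 1) := by simp [pF₁]

variable (S) in
theorem algebraMap_ω_sq_add : algebraMap ℂ S ω ^ 2 + algebraMap ℂ S ω + 1 = 0 := by
  simpa using congrArg (algebraMap ℂ S) ω_sq_add_ω_add_one

/-- The scalar `κ` for which `z₁ = κ(ω - t) / x` and `z₂ = κ(t - ω²) / x` satisfy
`z₁ + z₂ = 1 / x`. -/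
def κ : ℂ := (ω - ω ^ 2)⁻¹

variable (S) in
theorem algebraMap_κ_mul :
    algebraMap ℂ S κ * (algebraMap ℂ S ω - algebraMap ℂ S ω ^ 2) = 1 := by
  have h : ω - ω ^ 2 ≠ 0 := by
    rw [pow_two, sub_ne_zero, ne_eq, left_eq_mul₀ (isPrimitiveRoot_ω.ne_zero three_ne_zero)]
    exact isPrimitiveRoot_ω.ne_one (by norm_num)
  rw [← map_pow, ← map_sub, ← map_mul, κ, inv_mul_cancel₀ h, map_one]

/-- The function `x = 1 / (z₁ + z₂)` on `F₀`, as a polynomial in `z₁` and `z₂`. -/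
def xF₀ : MvPolynomial (Fin 2) ℂ := -(X 0 ^ 2 - X 0 * X 1 + X 1 ^ 2)

/-- The function `t = ω(z₂ + ωz₁) / (z₁ + z₂)` on `F₀`, as a polynomial in `z₁` and `z₂`. -/
def tF₀ : MvPolynomial (Fin 2) ℂ := ω • ((X 1 + ω • X 0) * xF₀)

theorem aeval_xF₀ (v : Fin 2 → S) : aeval v xF₀ = -(v 0 ^ 2 - v 0 * v 1 + v 1 ^ 2) := by
  simp [xF₀]

theorem aeval_tF₀ (v : Fin 2 → S) :
    aeval v tF₀ = algebraMap ℂ S ω * ((v 1 + algebraMap ℂ S ω * v 0) * aeval v xF₀) := by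
  simp [tF₀, Algebra.smul_def]

theorem add_mul_aeval_xF₀ {v : Fin 2 → S} (hv : aeval v pF₀ = 0) :
    (v 0 + v 1) * aeval v xF₀ = 1 := by
  rw [aeval_pF₀] at hv
  rw [aeval_xF₀]
  linear_combination -hv

theorem aeval_pF₁_aeval_tF₀_xF₀ {v : Fin 2 → S} (hv : aeval v pF₀ = 0) :
    aeval ![aeval v tF₀, aeval v xF₀] pF₁ = 0 := by
  rw [aeval_pF₁, sub_eq_zero]
  exact cube_eq_of_fermat (algebraMap_ω_sq_add S) (by rw [← aeval_pF₀, hv]) (aeval_xF₀ v)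
    (aeval_tF₀ v)

/-- The `S`-valued point `(z₁, z₂)` of `F₀` lying over the point `(t, x)` of `F₁`, where `u` stands
for `1 / x`. -/
def fermatPoint (t u : S) : Fin 2 → S :=
  ![algebraMap ℂ S κ * (algebraMap ℂ S ω - t) * u,
    algebraMap ℂ S κ * (t - algebraMap ℂ S ω ^ 2) * u]

theorem map_fermatPoint {T : Type*} [CommRing T] [Algebra ℂ T] (φ : S →ₐ[ℂ] T) (t u : S) :
    φ ∘ fermatPoint t u = fermatPoint (φ t) (φ u) := by
  ext i
  fin_cases i <;> simp [fermatPoint]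

theorem fermatPoint_zero_add_one (t u : S) : fermatPoint t u 0 + fermatPoint t u 1 = u := by
  simp only [fermatPoint, Matrix.cons_val_zero, Matrix.cons_val_one]
  linear_combination u * algebraMap_κ_mul S

theorem fermatPoint_aeval_tF₀ {v : Fin 2 → S} (hv : aeval v pF₀ = 0) :
    fermatPoint (aeval v tF₀) (v 0 + v 1) = v := by
  set w := algebraMap ℂ S ω
  have hκ := algebraMap_κ_mul S
  have hx := add_mul_aeval_xF₀ hv
  ext i
  fin_cases i
  · change algebraMap ℂ S κ * (w - aeval v tF₀) * (v 0 + v 1) = v 0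
    rw [aeval_tF₀]
    linear_combination v 0 * hκ - algebraMap ℂ S κ * w * (v 1 + w * v 0) * hx
  · change algebraMap ℂ S κ * (aeval v tF₀ - w ^ 2) * (v 0 + v 1) = v 1
    rw [aeval_tF₀]
    linear_combination v 1 * hκ + algebraMap ℂ S κ * w * (v 1 + w * v 0) * hx

theorem aeval_fermatPoint_pF₀ {t x u : S} (hu : x * u = 1) (h : x ^ 3 = t * (t + 1)) :
    aeval (fermatPoint t u) pF₀ = 0 := by
  rw [aeval_pF₀]
  exact fermat_of_cube_eq (algebraMap_ω_sq_add S) h hu (algebraMap_κ_mul S)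

theorem aeval_fermatPoint_xF₀ {t x u : S} (hu : x * u = 1) (h : x ^ 3 = t * (t + 1)) :
    aeval (fermatPoint t u) xF₀ = x := by
  have h' := add_mul_aeval_xF₀ (aeval_fermatPoint_pF₀ hu h)
  rw [fermatPoint_zero_add_one] at h'
  exact (left_inv_eq_right_inv hu h').symm

theorem aeval_fermatPoint_tF₀ {t x u : S} (hu : x * u = 1) (h : x ^ 3 = t * (t + 1)) :
    aeval (fermatPoint t u) tF₀ = t := by
  rw [aeval_tF₀, aeval_fermatPoint_xF₀ hu h]
  dsimp only [fermatPoint, Matrix.cons_val_zero, Matrix.cons_val_one]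
  linear_combination u * x * t * algebraMap_κ_mul S + t * hu

end Curves

/-- The morphism `F₀ → F₁` given by `(t, x)`, on coordinate rings. -/
def fermatPullback : HSurf pF₁ →ₐ[ℂ] HSurf pF₀ :=
  HSurf.lift _ (aeval_pF₁_aeval_tF₀_xF₀ (HSurf.aeval_coord_self pF₀))

theorem fermatPullback_coord_zero :
    fermatPullback (HSurf.coord pF₁ 0) = aeval (HSurf.coord pF₀) tF₀ :=
  HSurf.lift_coord _ _ 0

theorem fermatPullback_coord_one :
    fermatPullback (HSurf.coord pF₁ 1) = aeval (HSurf.coord pF₀) xF₀ :=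
  HSurf.lift_coord _ _ 1

theorem isUnit_fermatPullback_coord_one : IsUnit (fermatPullback (HSurf.coord pF₁ 1)) := by
  rw [fermatPullback_coord_one]
  exact .of_mul_eq_one_right _ (add_mul_aeval_xF₀ (HSurf.aeval_coord_self pF₀))

/-- The coordinate ring of the open subset `x ≠ 0` of `F₁`. -/
abbrev AwayX : Type := Localization.Away (HSurf.coord pF₁ 1)

namespace AwayX

/-- The coordinate function `t`. -/
def t : AwayX := algebraMap _ _ (HSurf.coord pF₁ 0)

/-- The coordinate function `x`. -/
def x : AwayX := algebraMap _ _ (HSurf.coord pF₁ 1)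

/-- The function `1 / x`. -/
def xInv : AwayX := IsLocalization.Away.invSelf (HSurf.coord pF₁ 1)

theorem x_mul_xInv : x * xInv = 1 := IsLocalization.Away.mul_invSelf _

theorem x_cube : x ^ 3 = t * (t + 1) := by
  have h : (HSurf.coord pF₁ 1) ^ 3 = HSurf.coord pF₁ 0 * (HSurf.coord pF₁ 0 + 1) := by
    rw [← sub_eq_zero, ← aeval_pF₁, HSurf.aeval_coord_self]
  simpa [x, t] using congrArg (algebraMap _ AwayX) h

/-- The morphism from the open subset `x ≠ 0` of `F₁` to `F₀`, on coordinate rings. -/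
def ofFermat : HSurf pF₀ →ₐ[ℂ] AwayX :=
  HSurf.lift (fermatPoint t xInv) (aeval_fermatPoint_pF₀ x_mul_xInv x_cube)

theorem ofFermat_coord (i : Fin 2) : ofFermat (HSurf.coord pF₀ i) = fermatPoint t xInv i :=
  HSurf.lift_coord _ _ i

theorem ofFermat_aeval_coord (p : MvPolynomial (Fin 2) ℂ) :
    ofFermat (aeval (HSurf.coord pF₀) p) = aeval (fermatPoint t xInv) p := by
  rw [← funext ofFermat_coord]
  exact AlgHom.congr_fun (comp_aeval (HSurf.coord pF₀) ofFermat) p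

/-- The morphism from `F₀` to the open subset `x ≠ 0` of `F₁`, on coordinate rings. -/
def toFermat : AwayX →ₐ[ℂ] HSurf pF₀ :=
  IsLocalization.Away.liftAlgHom _ isUnit_fermatPullback_coord_one

theorem toFermat_algebraMap (a : HSurf pF₁) : toFermat (algebraMap _ _ a) = fermatPullback a :=
  IsLocalization.Away.lift_eq _ isUnit_fermatPullback_coord_one a

theorem toFermat_t : toFermat t = aeval (HSurf.coord pF₀) tF₀ :=
  (toFermat_algebraMap _).trans fermatPullback_coord_zero

theorem toFermat_x : toFermat x = aeval (HSurf.coord pF₀) xF₀ :=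
  (toFermat_algebraMap _).trans fermatPullback_coord_one

theorem toFermat_xInv : toFermat xInv = HSurf.coord pF₀ 0 + HSurf.coord pF₀ 1 := by
  have h : toFermat x * toFermat xInv = 1 := by rw [← map_mul, x_mul_xInv, map_one]
  rw [toFermat_x] at h
  exact (left_inv_eq_right_inv (add_mul_aeval_xF₀ (HSurf.aeval_coord_self pF₀)) h).symm

theorem toFermat_comp_ofFermat : toFermat.comp ofFermat = AlgHom.id ℂ (HSurf pF₀) := by
  refine HSurf.algHom_ext fun i ↦ ?_
  rw [AlgHom.comp_apply, ofFermat_coord, ← Function.comp_apply (f := toFermat), map_fermatPoint,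
    toFermat_t, toFermat_xInv, fermatPoint_aeval_tF₀ (HSurf.aeval_coord_self pF₀), AlgHom.id_apply]

theorem ofFermat_comp_toFermat : ofFermat.comp toFermat = AlgHom.id ℂ AwayX := by
  have ht : ofFermat (toFermat t) = t := by
    rw [toFermat_t, ofFermat_aeval_coord, aeval_fermatPoint_tF₀ x_mul_xInv x_cube]
  have hx : ofFermat (toFermat x) = x := by
    rw [toFermat_x, ofFermat_aeval_coord, aeval_fermatPoint_xF₀ x_mul_xInv x_cube]
  exact IsLocalization.algHom_ext (.powers (HSurf.coord pF₁ 1)) <|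
    HSurf.algHom_ext (Fin.forall_fin_two.2 ⟨ht, hx⟩)

/-- The isomorphism of `F₀` with the open subset `x ≠ 0` of `F₁`, on coordinate rings. -/
def equivFermat : AwayX ≃ₐ[ℂ] HSurf pF₀ :=
  .ofAlgHom toFermat ofFermat toFermat_comp_ofFermat ofFermat_comp_toFermat

end AwayX

theorem coord_pF₁_one_mem_nonZeroDivisors :
    HSurf.coord pF₁ 1 ∈ nonZeroDivisors (HSurf pF₁) := by
  refine mk_mem_nonZeroDivisors_of_prime (X_prime (i := 1)) fun h ↦ ?_
  have h' := map_dvd (aeval ![(1 : ℂ), 0]) h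
  norm_num [aeval_pF₁] at h'

theorem exists_functionField_algEquiv_cls_X :
    ∃ ψ : FractionRing (HSurf pF₁) ≃ₐ[ℂ] FractionRing (HSurf pF₀),
      ψ (cls pF₁ (X 0)) = cls pF₀ tF₀ ∧ ψ (cls pF₁ (X 1)) = cls pF₀ xF₀ := by
  obtain ⟨ψ, hψ⟩ :=
    exists_fractionRing_algEquiv_of_away coord_pF₁_one_mem_nonZeroDivisors AwayX.equivFermat
  have hψ' (i : Fin 2) :
      ψ (cls pF₁ (X i)) = algebraMap _ _ (fermatPullback (HSurf.coord pF₁ i)) := by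
    rw [← AwayX.toFermat_algebraMap]
    exact hψ _
  refine ⟨ψ, ?_, ?_⟩
  · rw [hψ', fermatPullback_coord_zero, HSurf.aeval_coord, cls]
  · rw [hψ', fermatPullback_coord_one, HSurf.aeval_coord, cls]

/-- `ω` as a unit of `ℂ`. -/
def ωUnit : ℂˣ := (isPrimitiveRoot_ω.isUnit three_ne_zero).unit

/-- The automorphism `σ₀ : (z₁, z₂) ↦ (ω² z₁, ω² z₂)` of the plane. -/
def fermatAut : MvPolynomial (Fin 2) ℂ ≃ₐ[ℂ] MvPolynomial (Fin 2) ℂ :=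
  diagonalAut fun _ ↦ ωUnit ^ 2

theorem fermatAut_X (i : Fin 2) : fermatAut (X i) = ω ^ 2 • X i :=
  diagonalAut_X _ i

/-- The automorphism `σ₁ : (t, x) ↦ (t, ω x)` of the plane. -/
def cyclicAut : MvPolynomial (Fin 2) ℂ ≃ₐ[ℂ] MvPolynomial (Fin 2) ℂ :=
  diagonalAut ![1, ωUnit]

theorem cyclicAut_X_zero : cyclicAut (X 0) = X 0 :=
  (diagonalAut_X _ 0).trans (one_smul ℂ _)

theorem cyclicAut_X_one : cyclicAut (X 1) = ω • X 1 :=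
  diagonalAut_X _ 1

theorem fermatAut_pF₀ : fermatAut pF₀ = pF₀ := by
  have h : (ω ^ 2) ^ 3 = 1 := by rw [pow_right_comm, isPrimitiveRoot_ω.pow_eq_one, one_pow]
  simp only [pF₀, map_add, map_one, map_pow, fermatAut_X, smul_pow, h, one_smul]

theorem cyclicAut_pF₁ : cyclicAut pF₁ = pF₁ := by
  simp only [pF₁, map_sub, map_mul, map_add, map_one, map_pow, cyclicAut_X_zero, cyclicAut_X_one,
    smul_pow, isPrimitiveRoot_ω.pow_eq_one, one_smul]

theorem fermatAut_xF₀ : fermatAut xF₀ = ω • xF₀ := by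
  have h : ω ^ 2 * ω ^ 2 = ω := by linear_combination ω * isPrimitiveRoot_ω.pow_eq_one
  simp only [xF₀, map_neg, map_sub, map_add, map_mul, pow_two (X _), fermatAut_X,
    smul_mul_smul_comm, h, smul_neg, smul_add, smul_sub]

theorem fermatAut_tF₀ : fermatAut tF₀ = tF₀ := by
  have h : ω ^ 2 * ω = 1 := by rw [← pow_succ, isPrimitiveRoot_ω.pow_eq_one]
  simp only [tF₀, map_smul, map_mul, map_add, fermatAut_X, fermatAut_xF₀,
    smul_comm ω (ω ^ 2), ← smul_add, smul_mul_smul_comm, h, one_smul]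

/-- The automorphism of the function field of `F₀` induced by `σ₀`. -/
def fermatFieldAut : FractionRing (HSurf pF₀) ≃ₐ[ℂ] FractionRing (HSurf pF₀) :=
  HSurf.functionFieldAut fermatAut fermatAut_pF₀

/-- The automorphism of the function field of `F₁` induced by `σ₁`. -/
def cyclicFieldAut : FractionRing (HSurf pF₁) ≃ₐ[ℂ] FractionRing (HSurf pF₁) :=
  HSurf.functionFieldAut cyclicAut cyclicAut_pF₁

theorem fermatFieldAut_cls (p : MvPolynomial (Fin 2) ℂ) :
    fermatFieldAut (cls pF₀ p) = cls pF₀ (fermatAut p) :=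
  HSurf.functionFieldAut_cls fermatAut_pF₀ p

theorem fermatFieldAut_cls_X (i : Fin 2) :
    fermatFieldAut (cls pF₀ (X i)) = ω ^ 2 • cls pF₀ (X i) := by
  rw [fermatFieldAut_cls, fermatAut_X, HSurf.cls_smul]

theorem cyclicFieldAut_cls_X_zero : cyclicFieldAut (cls pF₁ (X 0)) = cls pF₁ (X 0) := by
  rw [cyclicFieldAut, HSurf.functionFieldAut_cls, cyclicAut_X_zero]

theorem cyclicFieldAut_cls_X_one : cyclicFieldAut (cls pF₁ (X 1)) = ω • cls pF₁ (X 1) := by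
  rw [cyclicFieldAut, HSurf.functionFieldAut_cls, cyclicAut_X_one, HSurf.cls_smul]

theorem orderOf_fermatFieldAut : orderOf fermatFieldAut = 3 := by
  have hX : cls pF₀ (X 0) ≠ 0 :=
    HSurf.cls_ne_zero (v := ![-1, 0]) (by norm_num [aeval_pF₀]) (by norm_num)
  refine HSurf.orderOf_eq_prime_of_forall_cls_X fermatFieldAut_cls_X (fun _ ↦ ?_)
    (isPrimitiveRoot_ω.pow_ne_one_of_pos_of_lt (by norm_num) (by norm_num)) hX
  rw [pow_right_comm, isPrimitiveRoot_ω.pow_eq_one, one_pow]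

theorem orderOf_cyclicFieldAut : orderOf cyclicFieldAut = 3 := by
  have hX : cls pF₁ (X 1) ≠ 0 := by
    refine HSurf.cls_ne_zero (v := ![ω, -1]) ?_ (by norm_num)
    rw [aeval_pF₁, Matrix.cons_val_zero, Matrix.cons_val_one, Matrix.cons_val_zero]
    linear_combination -ω_sq_add_ω_add_one
  refine HSurf.orderOf_eq_prime_of_forall_cls_X (d := ![1, ω]) (j := 1) ?_ ?_
    (isPrimitiveRoot_ω.ne_one (by norm_num)) hX
  · exact Fin.forall_fin_two.2
      ⟨cyclicFieldAut_cls_X_zero.trans (one_smul ℂ _).symm, cyclicFieldAut_cls_X_one⟩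
  · exact Fin.forall_fin_two.2 ⟨one_pow 3, isPrimitiveRoot_ω.pow_eq_one⟩

theorem cyclicFieldAut_trans_eq_trans_fermatFieldAut
    {ψ : FractionRing (HSurf pF₁) ≃ₐ[ℂ] FractionRing (HSurf pF₀)}
    (ht : ψ (cls pF₁ (X 0)) = cls pF₀ tF₀) (hx : ψ (cls pF₁ (X 1)) = cls pF₀ xF₀) :
    cyclicFieldAut.trans ψ = ψ.trans fermatFieldAut := by
  refine HSurf.fractionRing_algEquiv_ext (Fin.forall_fin_two.2 ⟨?_, ?_⟩)
  · rw [AlgEquiv.trans_apply, AlgEquiv.trans_apply, cyclicFieldAut_cls_X_zero, ht,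
      fermatFieldAut_cls, fermatAut_tF₀]
  · rw [AlgEquiv.trans_apply, AlgEquiv.trans_apply, cyclicFieldAut_cls_X_one, map_smul, hx,
      fermatFieldAut_cls, fermatAut_xF₀, HSurf.cls_smul]

/-- The curves `F₀` (with the order-3 automorphism
`σ₀ : (z₁,z₂) ↦ (ω²·z₁, ω²·z₂)`) and `F₁` (with the order-3 automorphism
`σ₁ : (t,x) ↦ (t, ω·x)`) are `G`-birationally equivalent for `G = ℤ/3ℤ`: there is a
`ℂ`-algebra isomorphism `φ` of their function fields with `φ ∘ σ̂₀ = σ̂₁ ∘ φ`, where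
`σ̂₀, σ̂₁` are the field automorphisms induced by `σ₀, σ₁`. -/
theorem stmt12 :
    ∃ (φ : FractionRing (HSurf pF₀) ≃ₐ[ℂ] FractionRing (HSurf pF₁))
      (σ₀ : FractionRing (HSurf pF₀) ≃ₐ[ℂ] FractionRing (HSurf pF₀))
      (σ₁ : FractionRing (HSurf pF₁) ≃ₐ[ℂ] FractionRing (HSurf pF₁)),
      orderOf σ₀ = 3 ∧
      σ₀ (cls pF₀ (X 0)) = (ω ^ 2 : ℂ) • cls pF₀ (X 0) ∧
      σ₀ (cls pF₀ (X 1)) = (ω ^ 2 : ℂ) • cls pF₀ (X 1) ∧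
      orderOf σ₁ = 3 ∧
      σ₁ (cls pF₁ (X 0)) = cls pF₁ (X 0) ∧
      σ₁ (cls pF₁ (X 1)) = (ω : ℂ) • cls pF₁ (X 1) ∧
      ∀ k, φ (σ₀ k) = σ₁ (φ k) := by
  obtain ⟨ψ, ht, hx⟩ := exists_functionField_algEquiv_cls_X
  have hψ : cyclicFieldAut.trans ψ = ψ.trans fermatFieldAut :=
    cyclicFieldAut_trans_eq_trans_fermatFieldAut ht hx
  refine ⟨ψ.symm, fermatFieldAut, cyclicFieldAut, orderOf_fermatFieldAut,
    fermatFieldAut_cls_X 0, fermatFieldAut_cls_X 1, orderOf_cyclicFieldAut,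
    cyclicFieldAut_cls_X_zero, cyclicFieldAut_cls_X_one, fun k ↦ ?_⟩
  rw [AlgEquiv.symm_apply_eq, ← AlgEquiv.trans_apply, hψ, AlgEquiv.trans_apply,
    AlgEquiv.apply_symm_apply]
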